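/- Let $M,N$ be integers with $N\ge 2$, $M>N$ (hence $M\ge 3$), and let $F\in\mathbb{R}^{M\times N}$ be the analysis operator of a unit-norm tight frame: the rows of $F$ have Euclidean norm $1$ and $F^{*}F=\frac{M}{N}I_N$. Put $F^{\dagger}=(F^{*}F)^{-1}F^{*}$. For a composition $m=(m_1,\dots,m_K)$ of $M$, let $\mathcal I_1,\dots,\mathcal I_K$ be the consecutive blocks of $\{1,\dots,M\}$ of sizes $m_1,\dots,m_K$. A vector $z\in\mathbb{R}^M$ is $m$-descending if $z_k\ge z_\ell$ whenever $k\in\mathcal I_i$, $\ell\in\mathcal I_j$ and $i<j$. Let $D(m)$ be the matrix with one row for each pair $(k,\ell)$ with $k\in\mathcal I_i$, $\ell\in\mathcal I_{i+1}$, $1\le i<K$, that row having entry $1$ in column $k$, entry $-1$ in column $\ell$ and zeros elsewhere. A Variant I initial codeword compatible with $m$ is a vector $\hat y_{\mathrm{init}}\in\mathbb{R}^M$ that equals a constant $\mu_i$ on each $\mathcal I_i$, with $\mu_1>\mu_2>\dots>\mu_K$. A Variant I frame permutation quantization (FPQ) encoding of $x\in\mathbb{R}^N$ is an $M\times M$ permutation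 matrix $P$ that preserves the order of appearance of the entries it places in each block $\mathcal I_i$ and for which $PFx$ is $m$-descending (when $Fx$ has ties there may be several such $P$, and all are admitted). Canonical reconstruction is consistent for $(m,\hat y_{\mathrm{init}})$ if, for every $x\in\mathbb{R}^N$ and every encoding $P$ of $x$, the vector $\hat x=F^{\dagger}P^{-1}\hat y_{\mathrm{init}}$ satisfies $D(m)PF\hat x\ge 0$ entrywise. The real harmonic tight frame of $M$ vectors in $\mathbb{R}^N$ is given, for $k=0,\dots,M-1$, by $$\varphi_{k+1}^{T}=\sqrt{\tfrac2N}\Big[\cos\tfrac{k\pi}{M},\cos\tfrac{3k\pi}{M},\dots,\cos\tfrac{(N-1)k\pi}{M},\sin\tfrac{k\pi}{M},\sin\tfrac{3k\pi}{M},\dots,\sin\tfrac{(N-1)k\pi}{M}\Big]$$ for even $N$ and $$\varphi_{k+1}^{T}=\sqrt{\tfrac2N}\Big[\tfrac1{\sqrt2},\cos\tfrac{2k\pi}{M},\cos\tfrac{4k\pi}{M},\dots,\cos\tfrac{(N-1)k\pi}{M},\sin\tfrac{2k\pi}{M},\sin\tfrac{4k\pi}{M},\dots,\sin\tfrac{(N-1)k\pi}{M}\Big]$$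 for odd $N$. The modulated harmonic tight frames are $\psi_k=\gamma(-1)^k\varphi_k$, $k=1,\dots,M$, with fixed $\gamma\in\{1,-1\}$. Type I equivalence applies one orthogonal matrix to all frame vectors; Type II equivalence permutes the frame vectors. Then canonical reconstruction is consistent for every composition $m$ of $M$ and every Variant I initial codeword compatible with $m$ if and only if $M=N+1$ and the frame given by the rows of $F$ is, up to Type I and/or Type II equivalence, a modulated harmonic tight frame. -/

import Mathlib

/-- The analysis operator of a unit-norm tight frame: the rows (the frame vectors) have Euclidean
norm one and `F* F = (M/N) I_N`. -/
structure IsUNTF {M N : ℕ} (F : Matrix (Fin M) (Fin N) ℝ) : Prop where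
  unit_norm : ∀ k : Fin M, ∑ i : Fin N, F k i ^ 2 = 1
  tight : F.transpose * F = ((M : ℝ) / (N : ℝ)) • (1 : Matrix (Fin N) (Fin N) ℝ)

/-- The real harmonic tight frame of `M` vectors in `ℝ^N`, as the matrix whose rows are the frame
vectors. Indices are 0-based: row `k` is `φ_{k+1}`, for `k = 0, …, M-1`. -/
noncomputable def htf (M N : ℕ) : Matrix (Fin M) (Fin N) ℝ :=
  Matrix.of fun k i =>
    if N % 2 = 0 then
      if (i : ℕ) < N / 2 then
        Real.sqrt (2 / N) * Real.cos (((2 * (i : ℕ) + 1 : ℕ) : ℝ) * (k : ℕ) * Real.pi / M)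
      else
        Real.sqrt (2 / N) *
          Real.sin (((2 * ((i : ℕ) - N / 2) + 1 : ℕ) : ℝ) * (k : ℕ) * Real.pi / M)
    else
      if (i : ℕ) = 0 then Real.sqrt (2 / N) * (1 / Real.sqrt 2)
      else if (i : ℕ) ≤ (N - 1) / 2 then
        Real.sqrt (2 / N) * Real.cos (((2 * (i : ℕ) : ℕ) : ℝ) * (k : ℕ) * Real.pi / M)
      else
        Real.sqrt (2 / N) *
          Real.sin (((2 * ((i : ℕ) - (N - 1) / 2) : ℕ) : ℝ) * (k : ℕ) * Real.pi / M)

/-- The harmonic tight frame modulated with sign `γ`: `ψ_k = γ (-1)^k φ_k` for `k = 1, …, M`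
(row `k` here is `ψ_{k+1}`). -/
noncomputable def modulatedHTF (M N : ℕ) (γ : ℝ) : Matrix (Fin M) (Fin N) ℝ :=
  Matrix.of fun k i => γ * (-1 : ℝ) ^ ((k : ℕ) + 1) * htf M N k i

/-- Type I equivalence: a common orthogonal matrix is applied to all frame vectors. -/
def TypeIEquiv {M N : ℕ} (Φ Ψ : Matrix (Fin M) (Fin N) ℝ) : Prop :=
  ∃ U ∈ Matrix.orthogonalGroup (Fin N) ℝ, ∀ k : Fin M, Ψ k = U.mulVec (Φ k)

/-- Type II equivalence: the frame vectors are permuted. -/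
def TypeIIEquiv {M N : ℕ} (Φ Ψ : Matrix (Fin M) (Fin N) ℝ) : Prop :=
  ∃ τ : Equiv.Perm (Fin M), ∀ k : Fin M, Ψ k = Φ (τ k)

/-- The rows of `F` form a modulated harmonic tight frame, up to Type I and/or Type II equivalence
(both equivalences are reflexive). -/
def IsModulatedHTFUpToEquiv {M N : ℕ} (F : Matrix (Fin M) (Fin N) ℝ) : Prop :=
  ∃ γ : ℝ, (γ = 1 ∨ γ = -1) ∧
    ∃ G : Matrix (Fin M) (Fin N) ℝ, TypeIEquiv (modulatedHTF M N γ) G ∧ TypeIIEquiv G F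

/-- `y` is a Variant I initial codeword compatible with the composition `m = (m_1, …, m_K)`:
`y = (μ_1, …, μ_1, …, μ_K, …, μ_K)` with `μ_1 > ⋯ > μ_K` and `μ_i` repeated `m_i` times. -/
def IsVariantICodeword {M : ℕ} (m : Composition M) (y : Fin M → ℝ) : Prop :=
  ∃ μ : Fin m.length → ℝ, StrictAnti μ ∧ ∀ k : Fin M, y k = μ (m.index k)

/-- `z` is `m`-descending: its `m_1` largest entries are in the first `m_1` positions, its `m_2`
next-largest entries are in the next `m_2` positions, and so on. -/
def IsDescending {M : ℕ} (m : Composition M) (z : Fin M → ℝ) : Prop :=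
  ∀ k l : Fin M, m.index k < m.index l → z l ≤ z k

/-- Indices of the rows of `D(m)`: the pairs `(k, l)` with `k` in some block of `m` and `l` in the
next block. -/
abbrev DiffRow {M : ℕ} (m : Composition M) : Type :=
  {p : Fin M × Fin M // (m.index p.1 : ℕ) + 1 = (m.index p.2 : ℕ)}

/-- The differencing matrix `D(m)`: row `(k, l)` has entry `1` in column `k`, entry `-1` in
column `l`, and zeros elsewhere. -/
def diffMatrix {M : ℕ} (m : Composition M) : Matrix (DiffRow m) (Fin M) ℝ :=
  Matrix.of fun p j => if j = p.1.1 then 1 else if j = p.1.2 then -1 else 0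

/-- The set `𝒢(m)` of permutations that keep, within every block of `m`, the order in which the
entries appeared: `(P y)_i = y_{σ i}` for `P = σ.permMatrix`. -/
def permSet {M : ℕ} (m : Composition M) : Set (Equiv.Perm (Fin M)) :=
  {σ | ∀ i j : Fin M, m.index i = m.index j → i < j → σ i < σ j}

/-- The permutation matrix `P` of `σ` is a Variant I FPQ encoding of `x` with frame `F` and
composition `m`: `P ∈ 𝒢(m)` and `P F x` is `m`-descending. -/
def IsVariantIEncoding {M N : ℕ} (F : Matrix (Fin M) (Fin N) ℝ) (m : Composition M)
    (x : Fin N → ℝ) (σ : Equiv.Perm (Fin M)) : Prop :=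
  σ ∈ permSet m ∧ IsDescending m ((σ.permMatrix ℝ).mulVec (F.mulVec x))

/-- The pseudo-inverse `F† = (F* F)⁻¹ F*`. -/
noncomputable def pinv {M N : ℕ} (F : Matrix (Fin M) (Fin N) ℝ) : Matrix (Fin N) (Fin M) ℝ :=
  (F.transpose * F)⁻¹ * F.transpose

/-- Canonical decoding `x̂ = F† P⁻¹ y_init`, where `P` is the permutation matrix of `σ`. -/
noncomputable def canonicalDecode {M N : ℕ} (F : Matrix (Fin M) (Fin N) ℝ)
    (y : Fin M → ℝ) (σ : Equiv.Perm (Fin M)) : Fin N → ℝ :=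
  (pinv F).mulVec (((σ⁻¹ : Equiv.Perm (Fin M)).permMatrix ℝ).mulVec y)

/-- `x'` is consistent with the encoding `P` (the permutation matrix of `σ`): `D(m) P F x' ≥ 0`
entrywise. -/
def IsConsistentWith {M N : ℕ} (F : Matrix (Fin M) (Fin N) ℝ) (m : Composition M)
    (σ : Equiv.Perm (Fin M)) (x' : Fin N → ℝ) : Prop :=
  ∀ p : DiffRow m,
    0 ≤ (diffMatrix m).mulVec ((σ.permMatrix ℝ).mulVec (F.mulVec x')) p

/-- Canonical reconstruction is consistent with Variant I FPQ encoding using the frame `F`, the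
composition `m` and the initial codeword `y`. -/
def CanonicalConsistent {M N : ℕ} (F : Matrix (Fin M) (Fin N) ℝ) (m : Composition M)
    (y : Fin M → ℝ) : Prop :=
  ∀ (x : Fin N → ℝ) (σ : Equiv.Perm (Fin M)), IsVariantIEncoding F m x σ →
    IsConsistentWith F m σ (canonicalDecode F y σ)

/-!
For a unit-norm tight frame `F`, the vector `F x̂` is a positive multiple of the Gram matrix
`G = F Fᵀ` applied to the permuted codeword. The vector `x = 0` ties all entries of `F x`, so with
the composition into ones every permutation encodes it, and consistency says that `G` preserves the
order of the coordinates of every vector without ties. By continuity it preserves any weakly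
decreasing order; as tied coordinates may be listed in either order, `G` keeps them tied. Applied to
the standard basis vectors, this makes all off-diagonal entries of `G` equal to one constant `c`,
and `G ^ 2 = (M / N) G` with `N < M` forces `M = N + 1` and `c = -1 / N`: the frame vectors are the
vertices of a regular simplex.

A tight frame is determined up to an orthogonal matrix by its Gram matrix. That of the harmonic
tight frame has entries `U_{N-1}(cos θ) / N` with `θ = (k - l) π / M`, by the Dirichlet-type
recurrence for Chebyshev polynomials of the second kind; for `M = N + 1` they are `± 1 / N` off the
diagonal, with the signs that the modulation turns into `-1 / N`. Conversely the Gram matrix of the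
simplex acts by `v ↦ (1 - c) v + const`, which preserves order, whence consistency.
-/

open Matrix

section Equicorrelation

variable {ι R : Type*} [DecidableEq ι]

/-- The equicorrelation matrix, with ones on the diagonal and the constant `c` off the diagonal: the
Gram matrix of a family of unit vectors whose mutual inner products are all equal to `c`. -/
def equicorrelation (ι : Type*) [DecidableEq ι] [One R] (c : R) : Matrix ι ι R :=
  of fun k l => if k = l then 1 else c

theorem equicorrelation_apply_self [One R] (c : R) (k : ι) : equicorrelation ι c k k = 1 :=
  if_pos rfl

theorem equicorrelation_apply_of_ne [One R] (c : R) {k l : ι} (hkl : k ≠ l) :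
    equicorrelation ι c k l = c :=
  if_neg hkl

theorem equicorrelation_submatrix [One R] (c : R) (τ : Equiv.Perm ι) :
    (equicorrelation ι c).submatrix τ τ = equicorrelation ι c := by
  ext k l
  simp [equicorrelation]

theorem exists_eq_equicorrelation [One R] {A : Matrix ι ι R} (hA : A.IsSymm)
    (hdiag : ∀ k, A k k = 1) (hcol : ∀ j k l, k ≠ j → l ≠ j → A k j = A l j) :
    ∃ c, A = equicorrelation ι c := by
  rcases subsingleton_or_nontrivial ι with _ | _
  · refine ⟨1, ext fun k l => ?_⟩
    rw [Subsingleton.elim l k, hdiag, equicorrelation_apply_self]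
  obtain ⟨i, j, hij⟩ := exists_pair_ne ι
  refine ⟨A i j, ext fun k l => ?_⟩
  rcases eq_or_ne k l with rfl | hkl
  · rw [hdiag, equicorrelation_apply_self]
  rw [equicorrelation_apply_of_ne _ hkl]
  rcases eq_or_ne k j with rfl | hkj
  · rw [← hA.apply, hcol k l i hkl.symm hij]
  · rw [← hA.apply k l, hcol k l j hkl.symm hkj.symm, ← hA.apply j k, hcol j k i hkj hij]

variable [Fintype ι] [CommRing R]

theorem equicorrelation_mulVec_apply (c : R) (v : ι → R) (k : ι) :
    (equicorrelation ι c *ᵥ v) k = (1 - c) * v k + c * ∑ l, v l := by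
  have hentry (l : ι) :
      equicorrelation ι c k l * v l = (if k = l then (1 - c) * v l else 0) + c * v l := by
    rw [equicorrelation, of_apply]
    split_ifs <;> ring
  simp only [mulVec, dotProduct, hentry, Finset.sum_add_distrib, ← Finset.mul_sum,
    Finset.sum_ite_eq, Finset.mem_univ, if_true]

theorem sum_equicorrelation_apply (c : R) (l : ι) :
    ∑ k, equicorrelation ι c k l = 1 + (Fintype.card ι - 1) * c := by
  have hentry (k : ι) : equicorrelation ι c k l = (if k = l then 1 - c else 0) + c := by
    rw [equicorrelation, of_apply]
    split_ifs <;> ring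
  simp only [hentry, Finset.sum_add_distrib, Finset.sum_ite_eq', Finset.mem_univ, if_true,
    Finset.sum_const, Finset.card_univ, nsmul_eq_mul]
  ring

theorem equicorrelation_mul_self_apply (c : R) (k l : ι) :
    (equicorrelation ι c * equicorrelation ι c) k l =
      (1 - c) * equicorrelation ι c k l + c * (1 + (Fintype.card ι - 1) * c) := by
  rw [← sum_equicorrelation_apply c l]
  exact equicorrelation_mulVec_apply c (fun j => equicorrelation ι c j l) k

theorem eq_of_equicorrelation_mul_self_eq_smul [Nonempty ι] {c t : R}
    (h : equicorrelation ι c * equicorrelation ι c = t • equicorrelation ι c) :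
    t = 1 + (Fintype.card ι - 1) * c ^ 2 := by
  obtain ⟨k⟩ := ‹Nonempty ι›
  have hdiag := congrFun₂ h k k
  rw [equicorrelation_mul_self_apply, Matrix.smul_apply, equicorrelation_apply_self,
    smul_eq_mul] at hdiag
  linear_combination -hdiag

theorem mul_eq_zero_of_equicorrelation_mul_self_eq_smul [Nontrivial ι] {c t : R}
    (h : equicorrelation ι c * equicorrelation ι c = t • equicorrelation ι c) :
    c * (1 - c) * (1 + (Fintype.card ι - 1) * c) = 0 := by
  obtain ⟨k, l, hkl⟩ := exists_pair_ne ι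
  have hoff := congrFun₂ h k l
  rw [equicorrelation_mul_self_apply, Matrix.smul_apply, equicorrelation_apply_of_ne c hkl,
    smul_eq_mul] at hoff
  linear_combination hoff + c * eq_of_equicorrelation_mul_self_eq_smul h

end Equicorrelation

section HarmonicFrame

open Polynomial.Chebyshev

theorem chebyshev_U_add_two_mul {R : Type*} [CommRing R] (n : ℤ) (m : ℕ) :
    U R (n + 2 * m) = U R n + 2 * ∑ i ∈ Finset.range m, T R (n + 2 * i + 2) := by
  induction m with
  | zero => simp
  | succ m ih =>
    have hcast : n + 2 * ((m + 1 : ℕ) : ℤ) = n + 2 * m + 2 := by push_cast; ring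
    rw [hcast, U_eq_two_mul_T_add_U, ih, Finset.sum_range_succ]
    ring

theorem eval_cos_chebyshev_U_add_two_mul (θ : ℝ) (n : ℤ) (m : ℕ) :
    (U ℝ (n + 2 * m)).eval (Real.cos θ) =
      (U ℝ n).eval (Real.cos θ) + 2 * ∑ i : Fin m, Real.cos ((n + 2 * i + 2) * θ) := by
  rw [chebyshev_U_add_two_mul, Finset.sum_range]
  simp only [Polynomial.eval_add, Polynomial.eval_mul, Polynomial.eval_ofNat,
    Polynomial.eval_finsetSum, T_real_cos]
  push_cast
  rfl

theorem two_mul_sum_cos_odd_mul (θ : ℝ) (n : ℕ) :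
    2 * ∑ i : Fin n, Real.cos ((2 * i + 1) * θ) = (U ℝ (2 * n - 1)).eval (Real.cos θ) := by
  have hfreq (i : Fin n) : (2 * i + 1 : ℝ) = (-1 : ℤ) + 2 * i + 2 := by push_cast; ring
  rw [sub_eq_neg_add, eval_cos_chebyshev_U_add_two_mul, U_neg_one, Polynomial.eval_zero, zero_add]
  simp only [hfreq]

theorem one_add_two_mul_sum_cos_even_mul (θ : ℝ) (n : ℕ) :
    1 + 2 * ∑ i : Fin n, Real.cos ((2 * i + 2) * θ) = (U ℝ (2 * n)).eval (Real.cos θ) := by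
  rw [← zero_add (2 * (n : ℤ)), eval_cos_chebyshev_U_add_two_mul, U_zero, Polynomial.eval_one]
  simp only [Int.cast_zero, zero_add]

variable {M n : ℕ}

theorem htf_even_castAdd (k : Fin M) (i : Fin n) :
    htf M (n + n) k (Fin.castAdd n i) =
      √(2 / (n + n : ℕ)) * Real.cos ((2 * i + 1) * (k * Real.pi / M)) := by
  have hpar : (n + n) % 2 = 0 := by omega
  have hi : (i : ℕ) < (n + n) / 2 := by omega
  simp only [htf, of_apply, hpar, hi, Fin.val_castAdd, if_true]
  push_cast
  ring_nf

theorem htf_even_natAdd (k : Fin M) (i : Fin n) :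
    htf M (n + n) k (Fin.natAdd n i) =
      √(2 / (n + n : ℕ)) * Real.sin ((2 * i + 1) * (k * Real.pi / M)) := by
  have hpar : (n + n) % 2 = 0 := by omega
  have hi : ¬ n + (i : ℕ) < (n + n) / 2 := by omega
  have hsub : n + (i : ℕ) - (n + n) / 2 = i := by omega
  simp only [htf, of_apply, hpar, hi, hsub, Fin.val_natAdd, if_true, if_false]
  push_cast
  ring_nf

theorem htf_odd_zero (k : Fin M) :
    htf M (n + n + 1) k 0 = √(2 / (n + n + 1 : ℕ)) * (1 / √2) := by
  have hpar : ¬ (n + n + 1) % 2 = 0 := by omega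
  simp only [htf, of_apply, hpar, Fin.val_zero, if_true, if_false]

theorem htf_odd_succ_castAdd (k : Fin M) (i : Fin n) :
    htf M (n + n + 1) k (Fin.castAdd n i).succ =
      √(2 / (n + n + 1 : ℕ)) * Real.cos ((2 * i + 2) * (k * Real.pi / M)) := by
  have hpar : ¬ (n + n + 1) % 2 = 0 := by omega
  have hi : (i : ℕ) + 1 ≤ (n + n + 1 - 1) / 2 := by omega
  simp only [htf, of_apply, hpar, hi, Fin.val_succ, Fin.val_castAdd, Nat.succ_ne_zero, if_true,
    if_false]
  push_cast
  ring_nf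

theorem htf_odd_succ_natAdd (k : Fin M) (i : Fin n) :
    htf M (n + n + 1) k (Fin.natAdd n i).succ =
      √(2 / (n + n + 1 : ℕ)) * Real.sin ((2 * i + 2) * (k * Real.pi / M)) := by
  have hpar : ¬ (n + n + 1) % 2 = 0 := by omega
  have hi : ¬ n + (i : ℕ) + 1 ≤ (n + n + 1 - 1) / 2 := by omega
  have hsub : n + (i : ℕ) + 1 - (n + n + 1 - 1) / 2 = i + 1 := by omega
  simp only [htf, of_apply, hpar, hi, hsub, Fin.val_succ, Fin.val_natAdd, Nat.succ_ne_zero,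
    if_false]
  push_cast
  ring_nf

theorem sqrt_mul_cos_mul_add_sqrt_mul_sin_mul {a : ℝ} (ha : 0 ≤ a) (c α β : ℝ) :
    √a * Real.cos (c * α) * (√a * Real.cos (c * β)) +
      √a * Real.sin (c * α) * (√a * Real.sin (c * β)) = a * Real.cos (c * (α - β)) := by
  rw [mul_sub, Real.cos_sub]
  linear_combination (Real.cos (c * α) * Real.cos (c * β) +
    Real.sin (c * α) * Real.sin (c * β)) * Real.mul_self_sqrt ha

theorem htf_mul_transpose_apply_of_even (k l : Fin M) :
    (htf M (n + n) * (htf M (n + n))ᵀ) k l =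
      2 / (n + n : ℕ) * ∑ i : Fin n,
        Real.cos ((2 * i + 1) * (k * Real.pi / M - l * Real.pi / M)) := by
  rw [mul_apply, Fin.sum_univ_add, ← Finset.sum_add_distrib, Finset.mul_sum]
  refine Finset.sum_congr rfl fun i _ => ?_
  simp only [transpose_apply, htf_even_castAdd, htf_even_natAdd]
  exact sqrt_mul_cos_mul_add_sqrt_mul_sin_mul (by positivity) _ _ _

theorem htf_mul_transpose_apply_of_odd (k l : Fin M) :
    (htf M (n + n + 1) * (htf M (n + n + 1))ᵀ) k l =
      1 / (n + n + 1 : ℕ) * (1 + 2 * ∑ i : Fin n,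
        Real.cos ((2 * i + 2) * (k * Real.pi / M - l * Real.pi / M))) := by
  have hconst : htf M (n + n + 1) k 0 * htf M (n + n + 1) l 0 = 1 / (n + n + 1 : ℕ) := by
    rw [htf_odd_zero, htf_odd_zero, mul_mul_mul_comm, Real.mul_self_sqrt (by positivity),
      div_mul_div_comm, Real.mul_self_sqrt zero_le_two]
    ring
  rw [mul_apply, Fin.sum_univ_succ, Fin.sum_univ_add, ← Finset.sum_add_distrib, mul_add, mul_one,
    ← mul_assoc, Finset.mul_sum, transpose_apply, hconst]
  congr 1
  refine Finset.sum_congr rfl fun i _ => ?_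
  simp only [transpose_apply, htf_odd_succ_castAdd, htf_odd_succ_natAdd]
  rw [sqrt_mul_cos_mul_add_sqrt_mul_sin_mul (by positivity), one_div_mul_eq_div]

theorem natCast_mul_htf_mul_transpose_apply {N : ℕ} (hN : 0 < N) (k l : Fin M) :
    N * (htf M N * (htf M N)ᵀ) k l =
      (U ℝ (N - 1)).eval (Real.cos (k * Real.pi / M - l * Real.pi / M)) := by
  have hN' : (N : ℝ) ≠ 0 := by positivity
  obtain ⟨n, rfl | rfl⟩ := N.even_or_odd'
  · rw [two_mul] at hN' ⊢
    rw [htf_mul_transpose_apply_of_even, ← mul_assoc, mul_div_cancel₀ _ hN',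
      two_mul_sum_cos_odd_mul, ← two_mul, Nat.cast_mul, Nat.cast_ofNat]
  · rw [two_mul] at hN' ⊢
    rw [htf_mul_transpose_apply_of_odd, ← mul_assoc, mul_one_div_cancel hN', one_mul,
      one_add_two_mul_sum_cos_even_mul, ← two_mul]
    push_cast
    rw [add_sub_cancel_right]

theorem htf_mul_transpose_apply_self {N : ℕ} (hN : 0 < N) (k : Fin M) :
    (htf M N * (htf M N)ᵀ) k k = 1 := by
  have hN' : (N : ℝ) ≠ 0 := by positivity
  have h := natCast_mul_htf_mul_transpose_apply hN k k
  rw [sub_self, Real.cos_zero, U_eval_one] at h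
  push_cast at h
  rw [sub_add_cancel] at h
  exact (mul_eq_left₀ hN').1 h

theorem sin_natCast_mul_pi_div_sub_ne_zero {k l : Fin M} (hkl : k ≠ l) :
    Real.sin (k * Real.pi / M - l * Real.pi / M) ≠ 0 := by
  have hM : (0 : ℝ) < M := by exact_mod_cast k.pos
  have hk : (k : ℝ) < M := by exact_mod_cast k.is_lt
  have hl : (l : ℝ) < M := by exact_mod_cast l.is_lt
  have hne : (k : ℝ) - l ≠ 0 := sub_ne_zero.2 (by exact_mod_cast Fin.val_ne_of_ne hkl)
  have hangle : k * Real.pi / M - l * Real.pi / M = (k - l) / M * Real.pi := by ring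
  have hlower : -1 < ((k : ℝ) - l) / M := by
    rw [lt_div_iff₀ hM]; linarith [Nat.cast_nonneg (α := ℝ) k]
  have hupper : ((k : ℝ) - l) / M < 1 := by
    rw [div_lt_one hM]; linarith [Nat.cast_nonneg (α := ℝ) l]
  rw [hangle, Ne, Real.sin_eq_zero_iff_of_lt_of_lt (by nlinarith [Real.pi_pos])
    (by nlinarith [Real.pi_pos])]
  exact mul_ne_zero (div_ne_zero hne hM.ne') Real.pi_ne_zero

theorem htf_succ_mul_transpose_apply_of_ne {N : ℕ} (hN : 0 < N) {k l : Fin (N + 1)} (hkl : k ≠ l) :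
    (htf (N + 1) N * (htf (N + 1) N)ᵀ) k l = (-1) ^ (k + l : ℕ) * (-1 / N) := by
  have hN' : (N : ℝ) ≠ 0 := by positivity
  set θ : ℝ := k * Real.pi / (N + 1 : ℕ) - l * Real.pi / (N + 1 : ℕ) with hθ
  have hfold : N * θ = k * Real.pi - (θ + l * Real.pi) := by
    rw [hθ]; push_cast; field_simp; ring
  have hsin : Real.sin (N * θ) = -((-1) ^ (k + l : ℕ) * Real.sin θ) := by
    rw [hfold, Real.sin_nat_mul_pi_sub, Real.sin_add_nat_mul_pi, pow_add, mul_assoc]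
  have hU : (U ℝ (N - 1)).eval (Real.cos θ) = -(-1) ^ (k + l : ℕ) := by
    have h := U_real_cos θ (N - 1)
    push_cast at h
    rw [sub_add_cancel, hsin, ← neg_mul] at h
    exact mul_right_cancel₀ (sin_natCast_mul_pi_div_sub_ne_zero hkl) h
  have hgram := natCast_mul_htf_mul_transpose_apply hN k l
  rw [← hθ, hU] at hgram
  rw [mul_div_assoc', eq_div_iff hN', mul_comm, hgram, mul_neg_one]

theorem modulatedHTF_mul_transpose_apply {N : ℕ} {γ : ℝ} (hγ : γ ^ 2 = 1) (k l : Fin M) :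
    (modulatedHTF M N γ * (modulatedHTF M N γ)ᵀ) k l =
      (-1) ^ (k + l : ℕ) * (htf M N * (htf M N)ᵀ) k l := by
  simp only [mul_apply, transpose_apply, Finset.mul_sum]
  refine Finset.sum_congr rfl fun i _ => ?_
  simp only [modulatedHTF, of_apply, pow_add, pow_one]
  linear_combination ((-1) ^ (k : ℕ) * (-1) ^ (l : ℕ) * htf M N k i * htf M N l i) * hγ

theorem modulatedHTF_succ_mul_transpose {N : ℕ} (hN : 0 < N) {γ : ℝ} (hγ : γ ^ 2 = 1) :
    modulatedHTF (N + 1) N γ * (modulatedHTF (N + 1) N γ)ᵀ =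
      equicorrelation (Fin (N + 1)) (-1 / N : ℝ) := by
  ext k l
  rw [modulatedHTF_mul_transpose_apply hγ]
  rcases eq_or_ne k l with rfl | hkl
  · rw [htf_mul_transpose_apply_self hN, equicorrelation_apply_self, mul_one,
      (Even.add_self _).neg_one_pow]
  · rw [htf_succ_mul_transpose_apply_of_ne hN hkl, equicorrelation_apply_of_ne _ hkl, ← mul_assoc,
      ← pow_add, (Even.add_self _).neg_one_pow, one_mul]

end HarmonicFrame

section Equivalence

variable {M N : ℕ} {Φ F : Matrix (Fin M) (Fin N) ℝ}

theorem TypeIEquiv.mul_transpose_eq (h : TypeIEquiv Φ F) : F * Fᵀ = Φ * Φᵀ := by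
  obtain ⟨U, hU, hrow⟩ := h
  have hF : F = Φ * Uᵀ := by
    ext k i
    rw [hrow k, mul_apply_eq_vecMul, vecMul_transpose]
  rw [hF, transpose_mul, transpose_transpose, Matrix.mul_assoc, ← Matrix.mul_assoc Uᵀ,
    (mem_orthogonalGroup_iff' (Fin N) ℝ).1 hU, Matrix.one_mul]

theorem TypeIIEquiv.exists_mul_transpose_eq_submatrix (h : TypeIIEquiv Φ F) :
    ∃ τ : Equiv.Perm (Fin M), F * Fᵀ = (Φ * Φᵀ).submatrix τ τ := by
  obtain ⟨τ, hrow⟩ := h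
  refine ⟨τ, ext fun k l => ?_⟩
  simp only [mul_apply, transpose_apply, submatrix_apply, hrow]

theorem typeIEquiv_of_mul_transpose_eq {a : ℝ} (ha : a ≠ 0)
    (htight : Fᵀ * F = a • (1 : Matrix (Fin N) (Fin N) ℝ)) (h : Φ * Φᵀ = F * Fᵀ) :
    TypeIEquiv Φ F := by
  set U : Matrix (Fin N) (Fin N) ℝ := a⁻¹ • (Fᵀ * Φ) with hU
  have hΦU : Φ * Uᵀ = F := by
    rw [hU, transpose_smul, transpose_mul, transpose_transpose, Matrix.mul_smul,
      ← Matrix.mul_assoc, h, Matrix.mul_assoc, htight, Matrix.mul_smul, Matrix.mul_one,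
      inv_smul_smul₀ ha]
  have hUU : U * Uᵀ = 1 := by
    rw [hU, Matrix.smul_mul, Matrix.mul_assoc, ← hU, hΦU, htight, inv_smul_smul₀ ha]
  refine ⟨U, (mem_orthogonalGroup_iff (Fin N) ℝ).2 hUU, fun k => ?_⟩
  rw [← vecMul_transpose, ← mul_apply_eq_vecMul, hΦU]

end Equivalence

namespace IsUNTF

variable {M N : ℕ} {F : Matrix (Fin M) (Fin N) ℝ}

theorem redundancy_pos (hF : IsUNTF F) (k : Fin M) : 0 < (M : ℝ) / N := by
  have hM : 0 < M := k.pos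
  have hN : 0 < N := by
    by_contra! h
    obtain rfl : N = 0 := Nat.le_zero.1 h
    simpa using hF.unit_norm k
  positivity

theorem mul_transpose_apply_self (hF : IsUNTF F) (k : Fin M) : (F * Fᵀ) k k = 1 := by
  simp only [← hF.unit_norm k, mul_apply, transpose_apply, sq]

theorem mul_transpose_mul_self (hF : IsUNTF F) :
    (F * Fᵀ) * (F * Fᵀ) = ((M : ℝ) / N) • (F * Fᵀ) := by
  rw [Matrix.mul_assoc, ← Matrix.mul_assoc Fᵀ, hF.tight, Matrix.smul_mul, Matrix.one_mul,
    Matrix.mul_smul]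

theorem pinv_eq (hF : IsUNTF F) : pinv F = ((M : ℝ) / N)⁻¹ • Fᵀ := by
  have hinv : (Fᵀ * F)⁻¹ = ((M : ℝ) / N)⁻¹ • (1 : Matrix (Fin N) (Fin N) ℝ) := by
    rw [hF.tight]
    rcases eq_or_ne ((M : ℝ) / N) 0 with h | h
    · rw [h, zero_smul, Matrix.inv_zero, _root_.inv_zero, zero_smul]
    · refine inv_eq_left_inv ?_
      rw [Matrix.mul_smul, Matrix.mul_one, smul_inv_smul₀ h]
  rw [pinv, hinv, Matrix.smul_mul, Matrix.one_mul]

theorem mulVec_canonicalDecode (hF : IsUNTF F) (y : Fin M → ℝ) (σ : Equiv.Perm (Fin M)) :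
    F *ᵥ canonicalDecode F y σ = ((M : ℝ) / N)⁻¹ • ((F * Fᵀ) *ᵥ (y ∘ σ.symm)) := by
  rw [canonicalDecode, hF.pinv_eq, permMatrix_mulVec, mulVec_mulVec, Matrix.mul_smul, smul_mulVec,
    Equiv.Perm.inv_def]

theorem eq_succ_and_eq_neg_one_div_of_mul_transpose_eq (hF : IsUNTF F) (hN : 2 ≤ N) (hNM : N < M)
    {c : ℝ} (hc : F * Fᵀ = equicorrelation (Fin M) c) : M = N + 1 ∧ c = -1 / N := by
  have : NeZero M := ⟨by omega⟩
  have : Nontrivial (Fin M) := Fin.nontrivial_iff_two_le.2 (by omega)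
  have hN' : (2 : ℝ) ≤ N := by exact_mod_cast hN
  have hNM' : (N : ℝ) < M := by exact_mod_cast hNM
  have hsq := hF.mul_transpose_mul_self
  rw [hc] at hsq
  have hwelch : (M : ℝ) = N * (1 + (M - 1) * c ^ 2) := by
    have h := eq_of_equicorrelation_mul_self_eq_smul hsq
    rw [Fintype.card_fin, div_eq_iff (by positivity)] at h
    exact h.trans (mul_comm _ _)
  have hprod := mul_eq_zero_of_equicorrelation_mul_self_eq_smul hsq
  rw [Fintype.card_fin] at hprod
  have hc0 : c ≠ 0 := by
    rintro rfl
    linarith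
  have hc1 : 1 - c ≠ 0 := by
    intro h
    obtain rfl : c = 1 := by linarith
    nlinarith
  have hsum : 1 + (M - 1) * c = 0 := (mul_eq_zero.1 hprod).resolve_left (mul_ne_zero hc0 hc1)
  have hM : (M : ℝ) = N + 1 := by
    have h : (M : ℝ) * (M - (N + 1)) = 0 := by
      linear_combination (M - 1) * hwelch + N * ((M - 1) * c - 1) * hsum
    linarith [(mul_eq_zero.1 h).resolve_left (by linarith)]
  refine ⟨by exact_mod_cast hM, ?_⟩
  rw [eq_div_iff (by positivity)]
  rw [hM] at hsum
  linarith

theorem isModulatedHTFUpToEquiv_iff {N : ℕ} {F : Matrix (Fin (N + 1)) (Fin N) ℝ} (hF : IsUNTF F)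
    (hN : 0 < N) :
    IsModulatedHTFUpToEquiv F ↔ F * Fᵀ = equicorrelation (Fin (N + 1)) (-1 / N : ℝ) := by
  constructor
  · rintro ⟨γ, hγ, G, hI, hII⟩
    obtain ⟨τ, hτ⟩ := hII.exists_mul_transpose_eq_submatrix
    rw [hτ, hI.mul_transpose_eq, modulatedHTF_succ_mul_transpose hN (sq_eq_one_iff.2 hγ),
      equicorrelation_submatrix]
  · intro h
    have hgram := (modulatedHTF_succ_mul_transpose hN (one_pow 2)).trans h.symm
    exact ⟨1, Or.inl rfl, F,
      typeIEquiv_of_mul_transpose_eq (hF.redundancy_pos 0).ne' hF.tight hgram, 1, fun _ => rfl⟩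

end IsUNTF

section Quantization

variable {M N : ℕ} {F : Matrix (Fin M) (Fin N) ℝ}

theorem diffMatrix_mulVec (m : Composition M) (z : Fin M → ℝ) (p : DiffRow m) :
    (diffMatrix m *ᵥ z) p = z p.1.1 - z p.1.2 := by
  have hne : p.1.2 ≠ p.1.1 := fun h => by
    have hblock := p.2
    rw [h] at hblock
    omega
  have hentry (j : Fin M) : diffMatrix m p j * z j =
      (if j = p.1.1 then z j else 0) - if j = p.1.2 then z j else 0 := by
    simp only [diffMatrix, of_apply]
    split_ifs <;> simp_all
  simp only [mulVec, dotProduct, hentry, Finset.sum_sub_distrib, Finset.sum_ite_eq',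
    Finset.mem_univ, if_true]

theorem isConsistentWith_iff (m : Composition M) (σ : Equiv.Perm (Fin M)) (x' : Fin N → ℝ) :
    IsConsistentWith F m σ x' ↔
      ∀ k l : Fin M, (m.index k : ℕ) + 1 = m.index l → (F *ᵥ x') (σ l) ≤ (F *ᵥ x') (σ k) := by
  simp only [IsConsistentWith, diffMatrix_mulVec, permMatrix_mulVec, Function.comp_apply,
    sub_nonneg, Subtype.forall, Prod.forall]

theorem IsUNTF.isConsistentWith_canonicalDecode_iff (hF : IsUNTF F) (m : Composition M)
    (y : Fin M → ℝ) (σ : Equiv.Perm (Fin M)) :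
    IsConsistentWith F m σ (canonicalDecode F y σ) ↔
      ∀ k l : Fin M, (m.index k : ℕ) + 1 = m.index l →
        ((F * Fᵀ) *ᵥ (y ∘ σ.symm)) (σ l) ≤ ((F * Fᵀ) *ᵥ (y ∘ σ.symm)) (σ k) := by
  rw [isConsistentWith_iff, hF.mulVec_canonicalDecode]
  refine forall₃_congr fun k _ _ => ?_
  exact smul_le_smul_iff_of_pos_left (inv_pos.2 (hF.redundancy_pos k))

theorem IsUNTF.canonicalConsistent_of_mul_transpose_eq (hF : IsUNTF F) {c : ℝ} (hc1 : c ≤ 1)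
    (hc : F * Fᵀ = equicorrelation (Fin M) c) {m : Composition M} {y : Fin M → ℝ}
    (hy : IsVariantICodeword m y) : CanonicalConsistent F m y := by
  obtain ⟨μ, hμ, hyμ⟩ := hy
  intro x σ _
  refine (hF.isConsistentWith_canonicalDecode_iff m y σ).2 fun k l hkl => ?_
  have hle : y l ≤ y k := by
    rw [hyμ, hyμ]
    exact hμ.antitone (Fin.le_def.2 (by omega))
  simp only [hc, equicorrelation_mulVec_apply, Function.comp_apply, Equiv.symm_apply_apply]
  gcongr

theorem composition_ones_index_val (k : Fin M) : ((Composition.ones M).index k : ℕ) = k := by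
  have hval := congrArg Fin.val ((Composition.ones M).embedding_comp_inv k)
  rw [Composition.coe_embedding, Composition.ones_sizeUpTo] at hval
  have hoffset := ((Composition.ones M).invEmbedding k).2.trans_eq (Composition.ones_blocksFun M _)
  have hindex := ((Composition.ones M).index k).2.trans_eq (Composition.ones_length M)
  omega

theorem isVariantICodeword_ones {y : Fin M → ℝ} (hy : StrictAnti y) :
    IsVariantICodeword (Composition.ones M) y := by
  refine ⟨y ∘ Fin.cast (Composition.ones_length M), fun i j hij => hy hij, fun k => ?_⟩
  exact congrArg y (Fin.ext (composition_ones_index_val k).symm)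

theorem isVariantIEncoding_ones_zero (F : Matrix (Fin M) (Fin N) ℝ) (σ : Equiv.Perm (Fin M)) :
    IsVariantIEncoding F (Composition.ones M) 0 σ := by
  refine ⟨fun i j hij hlt => absurd (Fin.ext ?_) hlt.ne, fun k l _ => ?_⟩
  · simpa only [composition_ones_index_val] using congrArg Fin.val hij
  · rw [mulVec_zero, mulVec_zero, Pi.zero_apply, Pi.zero_apply]

theorem IsUNTF.antitone_mul_transpose_mulVec_comp (hF : IsUNTF F)
    (h : ∀ y, IsVariantICodeword (Composition.ones M) y →
      CanonicalConsistent F (Composition.ones M) y)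
    {v : Fin M → ℝ} {σ : Equiv.Perm (Fin M)} (hv : StrictAnti (v ∘ σ)) :
    Antitone (((F * Fᵀ) *ᵥ v) ∘ σ) := by
  have hcons := h _ (isVariantICodeword_ones hv) 0 σ (isVariantIEncoding_ones_zero F σ)
  rw [hF.isConsistentWith_canonicalDecode_iff, Function.comp_assoc, Equiv.self_comp_symm,
    Function.comp_id] at hcons
  cases M with
  | zero => exact fun i => i.elim0
  | succ M =>
    refine Fin.antitone_iff_succ_le.2 fun i => hcons _ _ ?_
    simp only [composition_ones_index_val, Fin.val_castSucc, Fin.val_succ]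

end Quantization

section Rearrangement

variable {n : ℕ}

theorem antitone_comp_perm_of_strictAnti_comp_perm {T : (Fin n → ℝ) → Fin n → ℝ}
    (hTc : Continuous T)
    (hT : ∀ (v : Fin n → ℝ) (σ : Equiv.Perm (Fin n)), StrictAnti (v ∘ σ) → Antitone (T v ∘ σ))
    {v : Fin n → ℝ} {σ : Equiv.Perm (Fin n)} (hv : Antitone (v ∘ σ)) : Antitone (T v ∘ σ) := by
  let w : ℝ → Fin n → ℝ := fun ε i => v i - ε * (σ.symm i : ℕ)
  have hw0 : w 0 = v := by simp [w]
  have hwc : Continuous fun ε => T (w ε) ∘ σ := by fun_prop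
  have hlim : Filter.Tendsto (fun ε => T (w ε) ∘ σ) (nhdsWithin 0 (Set.Ioi 0))
      (nhds (T v ∘ σ)) := by
    simpa only [hw0] using (hwc.tendsto 0).mono_left nhdsWithin_le_nhds
  refine isClosed_antitone.mem_of_tendsto hlim (eventually_mem_nhdsWithin.mono fun ε hε => ?_)
  refine hT (w ε) σ fun i j hij => ?_
  have hlt : ε * (i : ℕ) < ε * (j : ℕ) := mul_lt_mul_of_pos_left (by exact_mod_cast hij) hε
  have hle : v (σ j) ≤ v (σ i) := hv hij.le
  simp only [w, Function.comp_apply, Equiv.symm_apply_apply]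
  linarith

theorem apply_eq_apply_of_antitone_comp_perm {α β : Type*} [LinearOrder α] [PartialOrder β]
    {T : (Fin n → α) → Fin n → β}
    (hT : ∀ (v : Fin n → α) (σ : Equiv.Perm (Fin n)), Antitone (v ∘ σ) → Antitone (T v ∘ σ))
    {v : Fin n → α} {k l : Fin n} (hkl : v k = v l) : T v k = T v l := by
  let σ : Equiv.Perm (Fin n) := Tuple.sort (OrderDual.toDual ∘ v)
  have hσ : Antitone (v ∘ σ) := Tuple.monotone_sort (OrderDual.toDual ∘ v)
  have hle {k l : Fin n} (hkl : v k = v l) : T v k ≤ T v l := by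
    rcases le_total (σ.symm l) (σ.symm k) with hpos | hpos
    · simpa using hT v σ hσ hpos
    · have hswap : v ∘ (Equiv.swap k l * σ : Equiv.Perm (Fin n)) = v ∘ σ := by
        rw [Equiv.Perm.coe_mul, ← Function.comp_assoc, Equiv.comp_swap_eq_update, hkl,
          Function.update_eq_self, ← hkl, Function.update_eq_self]
      simpa using hT v (Equiv.swap k l * σ) (hswap ▸ hσ) hpos
  exact (hle hkl).antisymm (hle hkl.symm)

end Rearrangement

theorem IsUNTF.exists_mul_transpose_eq_equicorrelation {M N : ℕ} {F : Matrix (Fin M) (Fin N) ℝ}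
    (hF : IsUNTF F)
    (h : ∀ y, IsVariantICodeword (Composition.ones M) y →
      CanonicalConsistent F (Composition.ones M) y) :
    ∃ c, F * Fᵀ = equicorrelation (Fin M) c := by
  have hmono (v : Fin M → ℝ) (σ : Equiv.Perm (Fin M)) (hv : Antitone (v ∘ σ)) :
      Antitone (((F * Fᵀ) *ᵥ v) ∘ σ) :=
    antitone_comp_perm_of_strictAnti_comp_perm (T := (F * Fᵀ).mulVec) (by fun_prop)
      (fun _ _ => hF.antitone_mul_transpose_mulVec_comp h) hv
  have hsymm : (F * Fᵀ).IsSymm := by rw [IsSymm, transpose_mul, transpose_transpose]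
  refine exists_eq_equicorrelation hsymm hF.mul_transpose_apply_self fun j k l hk hl => ?_
  have htie : Pi.single (M := fun _ => ℝ) j 1 k = Pi.single (M := fun _ => ℝ) j 1 l := by
    rw [Pi.single_eq_of_ne hk, Pi.single_eq_of_ne hl]
  simpa only [mulVec_single_one, col_apply] using
    apply_eq_apply_of_antitone_comp_perm hmono htie

/-- Characterization of the unit-norm tight frames for which canonical reconstruction is consistent
with Variant I frame permutation quantization. -/
theorem stmt11 {M N : ℕ} (hN : 2 ≤ N) (hNM : N < M) (hM : 3 ≤ M)
    (F : Matrix (Fin M) (Fin N) ℝ) (hF : IsUNTF F) :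
    (∀ (m : Composition M) (y : Fin M → ℝ), IsVariantICodeword m y → CanonicalConsistent F m y) ↔
      (M = N + 1 ∧ IsModulatedHTFUpToEquiv F) := by
  have hN0 : 0 < N := by omega
  constructor
  · intro h
    obtain ⟨c, hc⟩ := hF.exists_mul_transpose_eq_equicorrelation fun y hy => h _ y hy
    obtain ⟨rfl, rfl⟩ := hF.eq_succ_and_eq_neg_one_div_of_mul_transpose_eq hN hNM hc
    exact ⟨rfl, (hF.isModulatedHTFUpToEquiv_iff hN0).2 hc⟩
  · rintro ⟨rfl, hmod⟩ m y hy
    have hc1 : -1 / (N : ℝ) ≤ 1 := by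
      rw [div_le_one (by positivity)]
      linarith [Nat.cast_nonneg (α := ℝ) N]
    exact hF.canonicalConsistent_of_mul_transpose_eq hc1
      ((hF.isModulatedHTFUpToEquiv_iff hN0).1 hmod) hy
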